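/- Let X be a separable and reflexive real Banach space, Φ : X → ℝ a sequentially weakly lower semicontinuous C¹ functional (i.e., Φ(x) ≤ liminf Φ(x_n) whenever x_n converges weakly to x) that belongs to the class 𝔚_X, is bounded on each bounded subset of X, and whose derivative Φ' : X → X* admits a continuous inverse; let J : X → ℝ be a C¹ functional whose derivative J' : X → X* is a compact map. Assume Φ has a strict local minimum at x₀ with Φ(x₀) = J(x₀) = 0. Let 0 < a ≤ b be real numbers and assume: (i) there exists x̄ ∈ X with Φ(x̄) > 0 and J(x̄) > Φ(x̄)/a; (ii) there exist ε > 0 with ε ≤ 1/b, R > 0 and r > 0 such that J(x) ≤ (1/b − ε)·Φ(x) for every x with ‖x‖ ≥ R, and J(x) ≤ (1/b − ε)·Φ(x) for every x with 0 < ‖x − x₀‖ ≤ r. Then there exists γ > 0 with the following property: for every λ ∈ [a, b] and every C¹ functional Ψ : X → ℝ whose derivative Ψ' : X → X* is a compact map, there exists δ₀ > 0 such that for each μ ∈ [0, δ₀] the equation Φ'(u) = λ J'(u) + μ Ψ'(u) has at least three distinct solutions u in X with ‖u‖ ≤ γ. -/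

import Mathlib

open Filter Topology Bornology

lemma ekeland_aux {Y : Type*} [MetricSpace Y] [CompleteSpace Y] (f : Y → ℝ) (hf : Continuous f)
    (m : ℝ) (hm : ∀ y, m ≤ f y) (ε : ℝ) (hε : 0 < ε) (x : Y) :
    ∃ y, f y + ε * dist x y ≤ f x ∧ ∀ z, f y ≤ f z + ε * dist y z := by
  have hbd : ∀ y : Y, BddBelow (f '' {z | f z + ε * dist y z ≤ f y}) := fun y =>
    ⟨m, by rintro _ ⟨z, -, rfl⟩; exact hm z⟩
  have hstep : ∀ y : Y, ∃ z, f z + ε * dist y z ≤ f y ∧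
      ∀ w, f w + ε * dist y w ≤ f y → f z ≤ (f y + f w) / 2 := by
    intro y
    set S := {z | f z + ε * dist y z ≤ f y} with hS
    have hyS : y ∈ S := by simp [hS]
    have hle : sInf (f '' S) ≤ f y := csInf_le (hbd y) ⟨y, hyS, rfl⟩
    rcases hle.lt_or_eq with h | h
    · obtain ⟨_, ⟨z, hz, rfl⟩, hz2⟩ := exists_lt_of_csInf_lt (s := f '' S) ⟨_, y, hyS, rfl⟩
        (show sInf (f '' S) < (f y + sInf (f '' S)) / 2 by linarith)
      refine ⟨z, hz, fun w hw => ?_⟩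
      have : sInf (f '' S) ≤ f w := csInf_le (hbd y) ⟨w, hw, rfl⟩
      linarith
    · refine ⟨y, hyS, fun w hw => ?_⟩
      have : sInf (f '' S) ≤ f w := csInf_le (hbd y) ⟨w, hw, rfl⟩
      linarith
  choose T hT1 hT2 using hstep
  let u : ℕ → Y := fun n => T^[n] x
  have hu0 : u 0 = x := rfl
  have hus : ∀ n, u (n+1) = T (u n) := fun n => Function.iterate_succ_apply' T n x
  have h1 : ∀ n, f (u (n+1)) + ε * dist (u n) (u (n+1)) ≤ f (u n) := by
    intro n; rw [hus]; exact hT1 _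
  have h2 : ∀ n k, f (u (n+k)) + ε * dist (u n) (u (n+k)) ≤ f (u n) := by
    intro n k
    induction k with
    | zero => simp
    | succ k ih =>
      have := h1 (n+k)
      have h3 := dist_triangle (u n) (u (n+k)) (u (n+k+1))
      have h4 := mul_le_mul_of_nonneg_left h3 hε.le
      rw [← add_assoc]; linarith
  have hanti : Antitone (fun n => f (u n)) := antitone_nat_of_succ_le (fun n => by
    have := h1 n
    have h4 := mul_nonneg hε.le (dist_nonneg (x := u n) (y := u (n+1)))
    linarith)
  have hlim : Tendsto (fun n => f (u n)) atTop (𝓝 (⨅ n, f (u n))) :=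
    tendsto_atTop_ciInf hanti ⟨m, by rintro _ ⟨n, rfl⟩; exact hm _⟩
  set L := ⨅ n, f (u n)
  have hL : ∀ n, L ≤ f (u n) := fun n => hanti.le_of_tendsto hlim n
  have hcau : CauchySeq u := by
    refine cauchySeq_of_le_tendsto_0 (fun n => 2 * ((f (u n) - L) / ε)) ?_ ?_
    · have : ∀ N n, N ≤ n → dist (u N) (u n) ≤ (f (u N) - L) / ε := by
        intro N n hn
        obtain ⟨k, rfl⟩ := Nat.exists_eq_add_of_le hn
        rw [le_div_iff₀ hε]
        have := h2 N k
        have := hL (N+k)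
        linarith
      intro n k N hn hk
      have a1 := this N n hn
      have a2 := this N k hk
      have := dist_triangle_left (u n) (u k) (u N)
      linarith
    · have : Tendsto (fun n => 2 * ((f (u n) - L) / ε)) atTop (𝓝 (2 * ((L - L) / ε))) :=
        ((hlim.sub_const L).div_const ε).const_mul 2
      simpa using this
  obtain ⟨y, hy⟩ := cauchySeq_tendsto_of_complete hcau
  have hfy : f y = L := tendsto_nhds_unique ((hf.tendsto y).comp hy) hlim
  have h5 : ∀ n, f y + ε * dist (u n) y ≤ f (u n) := by
    intro n
    have ht : Tendsto (fun k => f (u k) + ε * dist (u n) (u k)) atTop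
        (𝓝 (f y + ε * dist (u n) y)) :=
      ((hf.tendsto y).comp hy).add ((tendsto_const_nhds.dist hy).const_mul ε)
    refine le_of_tendsto ht ?_
    filter_upwards [eventually_ge_atTop n] with k hk
    obtain ⟨j, rfl⟩ := Nat.exists_eq_add_of_le hk
    exact h2 n j
  refine ⟨y, h5 0, fun z => ?_⟩
  by_contra hz
  push Not at hz
  have h6 : ∀ n, f (u (n+1)) ≤ (f (u n) + f z) / 2 := by
    intro n
    rw [hus]
    refine hT2 _ z ?_
    have := h5 n
    have h4 := mul_le_mul_of_nonneg_left (dist_triangle (u n) y z) hε.le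
    linarith
  have h7 : L ≤ (L + f z) / 2 :=
    le_of_tendsto_of_tendsto' (hlim.comp (tendsto_add_atTop_nat 1))
      ((hlim.add_const (f z)).div_const 2) h6
  have := mul_nonneg hε.le (dist_nonneg (x := y) (y := z))
  linarith

section
variable {X : Type*} [NormedAddCommGroup X] [NormedSpace ℝ X]

lemma deriv_small_aux {f : X → ℝ} {f' : X →L[ℝ] ℝ} {y : X} (hf : HasFDerivAt f f' y)
    {ε : ℝ} (hε : 0 ≤ ε) (h : ∀ᶠ z in 𝓝 y, f y ≤ f z + ε * dist y z) : ‖f'‖ ≤ ε := by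
  have key : ∀ v : X, -(f' v) ≤ ε * ‖v‖ := by
    intro v
    have hd : HasDerivAt (fun t : ℝ => f (y + t • v)) (f' v) 0 := by
      have hl : HasDerivAt (fun t : ℝ => y + t • v) v 0 := by
        simpa using ((hasDerivAt_id (0:ℝ)).smul_const v).const_add y
      have hf2 : HasFDerivAt f f' (y + (0:ℝ) • v) := by simpa using hf
      exact hf2.comp_hasDerivAt (0:ℝ) hl
    have hs := hd.tendsto_slope_zero_right
    have hc : Tendsto (fun t : ℝ => y + t • v) (𝓝[>] 0) (𝓝 y) := by
      have : Continuous (fun t : ℝ => y + t • v) := by fun_prop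
      have h2 := this.tendsto 0
      simp only [zero_smul, add_zero] at h2
      exact h2.mono_left nhdsWithin_le_nhds
    have := ge_of_tendsto hs (b := -(ε * ‖v‖)) ?_
    · linarith
    filter_upwards [hc.eventually h, self_mem_nhdsWithin] with t ht ht0
    have ht0 : 0 < t := ht0
    simp only [dist_self_add_right, norm_smul, Real.norm_eq_abs, abs_of_pos ht0] at ht
    simp only [zero_add, zero_smul, add_zero, smul_eq_mul]
    rw [inv_mul_eq_div, le_div_iff₀ ht0]
    linarith
  refine f'.opNorm_le_bound hε fun v => ?_
  rw [Real.norm_eq_abs, abs_le]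
  have h1 := key v
  have h2 := key (-v)
  simp only [map_neg, norm_neg] at h2
  constructor <;> linarith

/-- Ekeland in the whole space -/
lemma ekeland_space [CompleteSpace X] {f : X → ℝ} {f' : X → X →L[ℝ] ℝ}
    (hf : ∀ x, HasFDerivAt f (f' x) x) (m : ℝ) (hm : ∀ y, m ≤ f y) {ε : ℝ} (hε : 0 < ε) (x : X) :
    ∃ y, f y + ε * dist x y ≤ f x ∧ ‖f' y‖ ≤ ε := by
  obtain ⟨y, h1, h2⟩ := ekeland_aux f
    (continuous_iff_continuousAt.2 fun x => (hf x).continuousAt) m hm ε hε x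
  exact ⟨y, h1, deriv_small_aux (hf y) hε.le (Eventually.of_forall h2)⟩

/-- Ekeland in a closed ball -/
lemma ekeland_ball [CompleteSpace X] {f : X → ℝ} {f' : X → X →L[ℝ] ℝ}
    (hf : ∀ x, HasFDerivAt f (f' x) x) (p : X) (ρ : ℝ)
    (m : ℝ) (hm : ∀ y, dist y p ≤ ρ → m ≤ f y) {ε : ℝ} (hε : 0 < ε) (x : X) (hx : dist x p ≤ ρ) :
    ∃ y, dist y p ≤ ρ ∧ f y + ε * dist x y ≤ f x ∧ (dist y p < ρ → ‖f' y‖ ≤ ε) := by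
  have hc : Continuous f := continuous_iff_continuousAt.2 fun x => (hf x).continuousAt
  have : CompleteSpace (Metric.closedBall p ρ) :=
    (Metric.isClosed_closedBall (x := p) (ε := ρ)).completeSpace_coe
  obtain ⟨⟨y, hy⟩, h1, h2⟩ := ekeland_aux (fun z : Metric.closedBall p ρ => f z)
    (hc.comp continuous_subtype_val) m (fun z => hm z z.2) ε hε ⟨x, hx⟩
  refine ⟨y, hy, h1, fun hlt => deriv_small_aux (hf y) hε.le ?_⟩
  filter_upwards [Metric.isOpen_ball.mem_nhds (show y ∈ Metric.ball p ρ from hlt)] with z hz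
  exact h2 ⟨z, Metric.ball_subset_closedBall hz⟩

/-- the perturbation step in the mountain pass theorem -/
lemma mp_step {E : X → ℝ} {E' : X → X →L[ℝ] ℝ}
    (hE : ∀ x, HasFDerivAt E (E' x) x) (hE' : Continuous E')
    (g v : C(unitInterval, X)) (I : ℝ) (hI : ∀ t, E (g t) ≤ I) (ε : ℝ)
    (hs : ∀ s : ℝ, 0 < s → ∃ t, I - ε * s ≤ E (g t + s • v t)) :
    ∃ t, E (g t) = I ∧ -ε ≤ E' (g t) (v t) := by
  have hc : Continuous E := continuous_iff_continuousAt.2 fun x => (hE x).continuousAt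
  have hpos : ∀ n : ℕ, (0:ℝ) < 1 / ((n:ℝ) + 1) := fun n => Nat.one_div_pos_of_nat
  choose t ht using fun n : ℕ => hs (1 / ((n:ℝ) + 1)) (hpos n)
  have hz : ∀ n, ∃ z ∈ segment ℝ (g (t n)) (g (t n) + (1 / ((n:ℝ) + 1)) • v (t n)),
      -ε ≤ E' z (v (t n)) := by
    intro n
    obtain ⟨z, hz, h⟩ := domain_mvt (f := E) (f' := E') (s := Set.univ)
      (fun x _ => (hE x).hasFDerivWithinAt) convex_univ (Set.mem_univ (g (t n)))
      (Set.mem_univ (g (t n) + (1 / ((n:ℝ) + 1)) • v (t n)))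
    refine ⟨z, hz, ?_⟩
    rw [add_sub_cancel_left, map_smul, smul_eq_mul] at h
    have h1 := ht n
    have h2 := hI (t n)
    have h3 : (1 / ((n:ℝ) + 1)) * (-ε) ≤ (1 / ((n:ℝ) + 1)) * E' z (v (t n)) := by
      rw [← h]; linarith
    exact le_of_mul_le_mul_left h3 (hpos n)
  choose z hz1 hz2 using hz
  obtain ⟨t₀, -, φ, hφ, hlim⟩ := isCompact_univ.tendsto_subseq (fun n => Set.mem_univ (t n))
  have hg : Tendsto (fun n => g (t (φ n))) atTop (𝓝 (g t₀)) := (g.continuous.tendsto t₀).comp hlim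
  have hv : Tendsto (fun n => v (t (φ n))) atTop (𝓝 (v t₀)) := (v.continuous.tendsto t₀).comp hlim
  have hs0 : Tendsto (fun n => (1 / ((φ n:ℝ) + 1))) atTop (𝓝 0) :=
    tendsto_one_div_add_atTop_nhds_zero_nat.comp hφ.tendsto_atTop
  have hsv : Tendsto (fun n => (1 / ((φ n:ℝ) + 1)) • v (t (φ n))) atTop (𝓝 0) := by
    simpa using hs0.smul hv
  have hgs : Tendsto (fun n => g (t (φ n)) + (1 / ((φ n:ℝ) + 1)) • v (t (φ n))) atTop
      (𝓝 (g t₀)) := by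
    simpa using hg.add hsv
  have hzlim : Tendsto (fun n => z (φ n)) atTop (𝓝 (g t₀)) := by
    have : Tendsto (fun n => z (φ n) - g (t (φ n))) atTop (𝓝 0) := by
      refine squeeze_zero_norm (fun n => ?_) (by simpa using hsv.norm)
      have := norm_sub_le_of_mem_segment (hz1 (φ n))
      simpa using this
    simpa using this.add hg
  refine ⟨t₀, le_antisymm (hI t₀) ?_, ?_⟩
  · have h1 : Tendsto (fun n => I - ε * (1 / ((φ n:ℝ) + 1))) atTop (𝓝 (I - ε * 0)) :=
      (hs0.const_mul ε).const_sub I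
    have := le_of_tendsto_of_tendsto' h1 ((hc.tendsto _).comp hgs) (fun n => ht (φ n))
    simpa using this
  · have h1 : Tendsto (fun n => E' (z (φ n)) (v (t (φ n)))) atTop (𝓝 (E' (g t₀) (v t₀))) :=
      by
      have h2 : Continuous fun w : X × X => E' w.1 w.2 := (hE'.comp continuous_fst).clm_apply continuous_snd
      exact (h2.tendsto (g t₀, v t₀)).comp (hzlim.prodMk_nhds hv)
    exact ge_of_tendsto' h1 (fun n => hz2 (φ n))

lemma mp_field {E : X → ℝ} {E' : X → X →L[ℝ] ℝ}
    (hE : ∀ x, HasFDerivAt E (E' x) x) (hE' : Continuous E')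
    (g : C(unitInterval, X)) (I : ℝ) (h0 : E (g 0) < I) (h1 : E (g 1) < I) (ε : ℝ)
    (hbig : ∀ t, E (g t) = I → ε < ‖E' (g t)‖) :
    ∃ v : C(unitInterval, X), v 0 = 0 ∧ v 1 = 0 ∧ (∀ t, ‖v t‖ ≤ 1) ∧
      ∀ t, E (g t) = I → E' (g t) (v t) < -ε := by
  have hc : Continuous E := continuous_iff_continuousAt.2 fun x => (hE x).continuousAt
  have hcg : Continuous fun t => E (g t) := hc.comp g.continuous
  let S : unitInterval → Set X := fun t => {v : X | ‖v‖ ≤ 1 ∧ (t = 0 ∨ t = 1 → v = 0) ∧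
      (E (g t) = I → E' (g t) v < -ε)}
  suffices hS : (∀ t, Convex ℝ (S t)) ∧ ∀ t, ∃ c, ∀ᶠ s in 𝓝 t, c ∈ S s by
    obtain ⟨v, hv⟩ := exists_continuous_forall_mem_convex_of_local_const hS.1 hS.2
    refine ⟨v, (hv 0).2.1 (Or.inl rfl), (hv 1).2.1 (Or.inr rfl), fun t => (hv t).1,
      fun t => (hv t).2.2⟩
  constructor
  · intro t x hx y hy a b ha hb hab
    refine ⟨?_, ?_, ?_⟩
    · have := (convex_closedBall (0:X) 1) (x := x) (by simpa using hx.1) (y := y)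
        (by simpa using hy.1) ha hb hab
      simpa using this
    · intro h
      rw [hx.2.1 h, hy.2.1 h]; simp
    · intro h
      have h2 := (convex_Iio (-ε)) (x := E' (g t) x) (hx.2.2 h) (y := E' (g t) y) (hy.2.2 h) ha hb hab
      simpa using h2
  · intro t
    by_cases h : E (g t) = I
    · obtain ⟨w, hw1, hw2⟩ := (E' (g t)).exists_lt_apply_of_lt_opNorm (hbig t h)
      have : ∃ w : X, ‖w‖ < 1 ∧ E' (g t) w < -ε := by
        rw [Real.norm_eq_abs] at hw2
        rcases lt_abs.1 hw2 with h3 | h3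
        · exact ⟨-w, by simpa using hw1, by simpa using h3⟩
        · exact ⟨w, hw1, by linarith⟩
      obtain ⟨w, hw1, hw2⟩ := this
      refine ⟨w, ?_⟩
      have hcw : Continuous fun s => E' (g s) w := (hE'.comp g.continuous).clm_apply continuous_const
      have e1 := hcw.continuousAt.eventually_lt continuousAt_const hw2
      have e2 : ∀ᶠ s in 𝓝 t, s ≠ 0 := isOpen_ne.mem_nhds (by rintro rfl; exact h0.ne h)
      have e3 : ∀ᶠ s in 𝓝 t, s ≠ 1 := isOpen_ne.mem_nhds (by rintro rfl; exact h1.ne h)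
      filter_upwards [e1, e2, e3] with s s1 s2 s3
      exact ⟨hw1.le, fun h => absurd h (by tauto), fun _ => s1⟩
    · refine ⟨0, ?_⟩
      have e1 : ∀ᶠ s in 𝓝 t, E (g s) ≠ I := hcg.continuousAt.eventually_ne h
      filter_upwards [e1] with s hs
      exact ⟨by simp, fun _ => rfl, fun h => absurd h hs⟩

lemma mountain_pass [CompleteSpace X] {E : X → ℝ} {E' : X → X →L[ℝ] ℝ}
    (hE : ∀ x, HasFDerivAt E (E' x) x) (hE' : Continuous E')
    (p q : X) (σ : ℝ) (hp : E p < σ) (hq : E q < σ)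
    (hsep : ∀ g : C(unitInterval, X), g 0 = p → g 1 = q → ∃ t, σ ≤ E (g t))
    {ε : ℝ} (hε : 0 < ε) :
    ∃ x, σ ≤ E x ∧ (∃ y ∈ segment ℝ p q, E x ≤ E y) ∧ ‖E' x‖ ≤ ε := by
  have hc : Continuous E := continuous_iff_continuousAt.2 fun x => (hE x).continuousAt
  let Γ : Set C(unitInterval, X) := {g | g 0 = p ∧ g 1 = q}
  have hΓ : IsClosed Γ := (isClosed_eq (continuous_eval_const (F := C(unitInterval, X)) 0) continuous_const).inter
    (isClosed_eq (continuous_eval_const (F := C(unitInterval, X)) 1) continuous_const)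
  have : CompleteSpace Γ := hΓ.completeSpace_coe
  let I : C(unitInterval, X) → ℝ := fun g => sSup ((fun t => E (g t)) '' Set.univ)
  have hIc : Continuous I := isCompact_univ.continuous_sSup
    (f := fun (g : C(unitInterval, X)) (t : unitInterval) => E (g t)) (by
      have : Continuous fun z : C(unitInterval, X) × unitInterval => E (z.1 z.2) := by fun_prop
      exact this)
  have hImax : ∀ g, ∃ t, E (g t) = I g := fun g => by
    obtain ⟨t, -, ht, -⟩ := isCompact_univ.exists_sSup_image_eq_and_ge
      (f := fun t => E (g t)) Set.univ_nonempty (hc.comp g.continuous).continuousOn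
    exact ⟨t, ht.symm⟩
  have hIle : ∀ g t, E (g t) ≤ I g := fun g t => by
    refine le_csSup (isCompact_univ.image (hc.comp g.continuous)).bddAbove ⟨t, trivial, rfl⟩
  let g₀ : C(unitInterval, X) := ⟨fun t => AffineMap.lineMap p q (t:ℝ), by
    exact AffineMap.lineMap_continuous.comp continuous_subtype_val⟩
  have hg₀ : g₀ ∈ Γ := ⟨by simp [g₀], by simp [g₀]⟩
  have hIσ : ∀ g ∈ Γ, σ ≤ I g := fun g hg => by
    obtain ⟨t, ht⟩ := hsep g hg.1 hg.2
    exact ht.trans (hIle g t)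
  obtain ⟨⟨g, hg⟩, hg1, hg2⟩ := ekeland_aux (fun g : Γ => I g) (hIc.comp continuous_subtype_val)
    σ (fun g => hIσ g g.2) ε hε ⟨g₀, hg₀⟩
  simp only at hg1 hg2
  have hσ := hIσ g hg
  by_cases hbig : ∀ t, E (g t) = I g → ε < ‖E' (g t)‖
  · exfalso
    obtain ⟨v, hv0, hv1, hvn, hv⟩ := mp_field hE hE' g (I g) (by rw [hg.1]; linarith)
      (by rw [hg.2]; linarith) ε hbig
    obtain ⟨t, ht1, ht2⟩ := mp_step hE hE' g v (I g) (hIle g) ε (by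
      intro s hs
      have hmem : g + s • v ∈ Γ := ⟨by simp [hv0, hg.1], by simp [hv1, hg.2]⟩
      have h1 := hg2 ⟨g + s • v, hmem⟩
      have h2 : dist (⟨g, hg⟩ : Γ) ⟨g + s • v, hmem⟩ ≤ s := by
        rw [Subtype.dist_eq]
        refine (ContinuousMap.dist_le hs.le).2 fun t => ?_
        simp [norm_smul, abs_of_pos hs]
        exact mul_le_of_le_one_right hs.le (hvn t)
      obtain ⟨t, ht⟩ := hImax (g + s • v)
      refine ⟨t, ?_⟩
      have h3 := mul_le_mul_of_nonneg_left h2 hε.le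
      simp at ht h1
      rw [ht]
      linarith)
    have := hv t ht1
    linarith
  · push Not at hbig
    obtain ⟨t, ht1, ht2⟩ := hbig
    refine ⟨g t, ht1 ▸ hσ, ?_, ht2⟩
    obtain ⟨s, hs⟩ := hImax g₀
    refine ⟨g₀ s, ?_, ?_⟩
    · rw [segment_eq_image_lineMap]
      exact ⟨s, s.2, rfl⟩
    · rw [ht1, hs]
      have := mul_nonneg hε.le (dist_nonneg (x := (⟨g₀, hg₀⟩ : Γ)) (y := ⟨g, hg⟩))
      linarith

lemma path_sphere (p q : X) (ρ : ℝ) (hρ : 0 ≤ ρ) (hq : ρ < dist q p) (g : C(unitInterval, X))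
    (h0 : g 0 = p) (h1 : g 1 = q) : ∃ t, dist (g t) p = ρ := by
  have hc : Continuous fun t => dist (g t) p := g.continuous.dist continuous_const
  exact mem_range_of_exists_le_of_exists_ge hc ⟨0, by simp [h0, hρ]⟩ ⟨1, by simp [h1, hq.le]⟩

lemma crit_of_ps {E' : X → X →L[ℝ] ℝ} (hE' : Continuous E') (S : Set X) (hS : IsClosed S)
    (hPS : ∀ x : ℕ → X, (∀ n, x n ∈ S) → Tendsto (fun n => E' (x n)) atTop (𝓝 0) →
      ∃ u, ∃ φ : ℕ → ℕ, StrictMono φ ∧ Tendsto (fun n => x (φ n)) atTop (𝓝 u))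
    (h : ∀ ε > 0, ∃ x ∈ S, ‖E' x‖ ≤ ε) : ∃ u ∈ S, E' u = 0 := by
  have hpos : ∀ n : ℕ, (0:ℝ) < 1 / ((n:ℝ) + 1) := fun n => Nat.one_div_pos_of_nat
  choose x hx1 hx2 using fun n : ℕ => h (1 / ((n:ℝ) + 1)) (hpos n)
  have hlim : Tendsto (fun n => E' (x n)) atTop (𝓝 0) :=
    squeeze_zero_norm hx2 tendsto_one_div_add_atTop_nhds_zero_nat
  obtain ⟨u, φ, hφ, hu⟩ := hPS x hx1 hlim
  refine ⟨u, hS.mem_of_tendsto hu (Eventually.of_forall fun n => hx1 _), ?_⟩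
  exact tendsto_nhds_unique ((hE'.tendsto u).comp hu) (hlim.comp hφ.tendsto_atTop)

lemma three_crit [CompleteSpace X] {E : X → ℝ} {E' : X → X →L[ℝ] ℝ}
    (hE : ∀ x, HasFDerivAt E (E' x) x) (hE' : Continuous E')
    (hPS : ∀ (C : ℝ) (x : ℕ → X), (∀ n, E (x n) ≤ C) → Tendsto (fun n => E' (x n)) atTop (𝓝 0) →
      ∃ u, ∃ φ : ℕ → ℕ, StrictMono φ ∧ Tendsto (fun n => x (φ n)) atTop (𝓝 u))
    (m : ℝ) (hm : ∀ x, m ≤ E x) (p q : X) (ρ τ σ : ℝ) (hρ : 0 < ρ)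
    (hball : ∀ x, dist x p ≤ ρ → -τ ≤ E x) (hsph : ∀ x, dist x p = ρ → σ ≤ E x)
    (hτσ : τ < σ) (hp : E p ≤ τ) (hq : E q < -τ) :
    ∃ u₁ u₂ u₃ : X, u₁ ≠ u₂ ∧ u₁ ≠ u₃ ∧ u₂ ≠ u₃ ∧ ∀ u ∈ ({u₁, u₂, u₃} : Set X),
      E' u = 0 ∧ ∃ y ∈ segment ℝ p q, E u ≤ E y := by
  have hc : Continuous E := continuous_iff_continuousAt.2 fun x => (hE x).continuousAt
  have hpp := hball p (by simp [hρ.le])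
  have hqd : ρ < dist q p := by
    by_contra h
    have := hball q (not_lt.1 h)
    linarith
  obtain ⟨u₁, ⟨hu1a, hu1b⟩, hu1c⟩ := crit_of_ps hE' {x | dist x p ≤ ρ ∧ E x ≤ E p}
    ((isClosed_le (continuous_id.dist continuous_const) continuous_const).inter (isClosed_le hc continuous_const))
    (fun x hx => hPS (E p) x fun n => (hx n).2) (by
      intro ε hε
      obtain ⟨y, h1, h2, h3⟩ := ekeland_ball hE p ρ (-τ) hball hε p (by simp [hρ.le])
      have h4 := mul_nonneg hε.le (dist_nonneg (x := p) (y := y))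
      refine ⟨y, ⟨h1, by linarith⟩, h3 (lt_of_le_of_ne h1 fun h => ?_)⟩
      have := hsph y h
      linarith)
  obtain ⟨u₂, hu2a, hu2b⟩ := crit_of_ps hE' {x | E x ≤ E q}
    (isClosed_le hc continuous_const)
    (fun x hx => hPS (E q) x fun n => hx n) (by
      intro ε hε
      obtain ⟨y, h2, h3⟩ := ekeland_space hE m hm hε q
      have h4 := mul_nonneg hε.le (dist_nonneg (x := q) (y := y))
      exact ⟨y, by simp only [Set.mem_ofPred_eq]; linarith, h3⟩)
  obtain ⟨y₀, hy₀, hy₀max⟩ : ∃ y₀ ∈ segment ℝ p q, ∀ y ∈ segment ℝ p q, E y ≤ E y₀ := by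
    have hk : IsCompact (segment ℝ p q) := by
      rw [segment_eq_image_lineMap]
      exact isCompact_Icc.image AffineMap.lineMap_continuous
    exact hk.exists_isMaxOn ⟨p, left_mem_segment ℝ p q⟩ hc.continuousOn
  obtain ⟨u₃, ⟨hu3a, hu3b⟩, hu3c⟩ := crit_of_ps hE' {x | σ ≤ E x ∧ E x ≤ E y₀}
    ((isClosed_le continuous_const hc).inter (isClosed_le hc continuous_const))
    (fun x hx => hPS (E y₀) x fun n => (hx n).2) (by
      intro ε hε
      obtain ⟨x, h1, ⟨y, hy, h2⟩, h3⟩ := mountain_pass hE hE' p q σ (by linarith) (by linarith)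
        (fun g h0 h1 => by
          obtain ⟨t, ht⟩ := path_sphere p q ρ hρ.le hqd g h0 h1
          exact ⟨t, hsph _ ht⟩) hε
      exact ⟨x, ⟨h1, h2.trans (hy₀max y hy)⟩, h3⟩)
  have hu1d := hball u₁ hu1a
  simp only [Set.mem_ofPred_eq] at hu2a
  refine ⟨u₁, u₂, u₃, ?_, ?_, ?_, ?_⟩
  · rintro rfl; linarith
  · rintro rfl; linarith
  · rintro rfl; linarith
  · rintro u (rfl | rfl | rfl)
    · exact ⟨hu1c, p, left_mem_segment ℝ p q, hu1b⟩
    · exact ⟨hu2b, q, right_mem_segment ℝ p q, hu2a⟩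
    · exact ⟨hu3c, y₀, hy₀, hu3b⟩

lemma ps_of_compact {Φ' K E' : X → X →L[ℝ] ℝ} (Φ'inv : (X →L[ℝ] ℝ) → X)
    (hΦ'inv_cont : Continuous Φ'inv) (hleft : Function.LeftInverse Φ'inv Φ')
    (hE : ∀ x, E' x = Φ' x - K x) (x : ℕ → X) (S : Set (X →L[ℝ] ℝ)) (hS : IsCompact S)
    (hx : ∀ n, K (x n) ∈ S) (h : Tendsto (fun n => E' (x n)) atTop (𝓝 0)) :
    ∃ u, ∃ φ : ℕ → ℕ, StrictMono φ ∧ Tendsto (fun n => x (φ n)) atTop (𝓝 u) := by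
  obtain ⟨f, -, φ, hφ, hf⟩ := hS.tendsto_subseq hx
  refine ⟨Φ'inv f, φ, hφ, ?_⟩
  have h1 : Tendsto (fun n => Φ' (x (φ n))) atTop (𝓝 f) := by
    have := (h.comp hφ.tendsto_atTop).add hf
    simpa [Function.comp_def, hE] using this
  have h2 := (hΦ'inv_cont.tendsto f).comp h1
  simpa [Function.comp_def, hleft _] using h2

lemma bdd_of_compact_deriv {J : X → ℝ} {J' : X → X →L[ℝ] ℝ}
    (hJ : ∀ x, HasFDerivAt J (J' x) x)
    (hJ'cpt : ∀ s : Set X, IsBounded s → IsCompact (closure (J' '' s))) (R : ℝ) (hR : 0 < R) :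
    ∃ C, 0 ≤ C ∧ ∀ x, ‖x‖ ≤ R → |J x| ≤ C := by
  obtain ⟨L, hL⟩ := (hJ'cpt _ (Metric.isBounded_closedBall (x := (0:X)) (r := R))).isBounded.exists_norm_le
  have h1 : ∀ x, ‖x‖ ≤ R → |J x| ≤ |J 0| + L * R := by
    intro x hx
    have h := (convex_closedBall (0:X) R).norm_image_sub_le_of_norm_hasFDerivWithin_le (f := J)
      (f' := J') (C := L) (fun y _ => (hJ y).hasFDerivWithinAt)
      (fun y hy => hL _ (subset_closure ⟨y, hy, rfl⟩)) (x := 0) (y := x) (by simp [hR.le])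
      (by simpa using hx)
    have hL0 : 0 ≤ L := (norm_nonneg _).trans (hL _ (subset_closure ⟨0, by simp [hR.le], rfl⟩))
    rw [Real.norm_eq_abs, sub_zero] at h
    have h3 := mul_le_mul_of_nonneg_left hx hL0
    have h4 := abs_sub_abs_le_abs_sub (J x) (J 0)
    linarith
  exact ⟨_, (abs_nonneg _).trans (h1 0 (by simp [hR.le])), h1⟩

/-- truncation function -/
lemma trunc_exists (M : ℝ) (hM : 0 ≤ M) : ∃ h h' : ℝ → ℝ, ∃ B : ℝ, 0 < B ∧
    (∀ t, HasDerivAt h (h' t) t) ∧ Continuous h' ∧ (∀ t, |h t| ≤ B) ∧ (∀ t, |h' t| ≤ B) ∧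
    (∀ t, |t| ≤ M → h' t = 1) := by
  let φ : ContDiffBump (0:ℝ) := ⟨M + 1, M + 2, by linarith, by linarith⟩
  let h : ℝ → ℝ := fun t => φ t * t
  have hsm : ContDiff ℝ 1 h := φ.contDiff.mul contDiff_id
  have hcs : HasCompactSupport h := φ.hasCompactSupport.mul_right
  have hcs' : HasCompactSupport (deriv h) := hcs.deriv
  have hcd : Continuous (deriv h) := hsm.continuous_deriv le_rfl
  obtain ⟨B1, hB1⟩ := hcs.exists_bound_of_continuous hsm.continuous
  obtain ⟨B2, hB2⟩ := hcs'.exists_bound_of_continuous hcd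
  refine ⟨h, deriv h, max (max B1 B2) 1, by positivity,
    fun t => (hsm.differentiable one_ne_zero t).hasDerivAt, hcd, fun t => ?_, fun t => ?_, fun t ht => ?_⟩
  · exact (hB1 t).trans ((le_max_left _ _).trans (le_max_left _ _))
  · exact (hB2 t).trans ((le_max_right _ _).trans (le_max_left _ _))
  · have : h =ᶠ[𝓝 t] id := by
      have := φ.eventuallyEq_one_of_mem_ball (x := t) (by
        simp only [Metric.mem_ball, dist_zero_right, Real.norm_eq_abs]
        show |t| < M + 1
        linarith)
      filter_upwards [this] with s hs
      simp [h, hs]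
    rw [this.deriv_eq]; simp

lemma phi_sphere [CompleteSpace X] {Φ : X → ℝ} {Φ' : X → X →L[ℝ] ℝ}
    (hΦ : ∀ x, HasFDerivAt Φ (Φ' x) x) (Φ'inv : (X →L[ℝ] ℝ) → X) (hcont : Continuous Φ'inv)
    (hleft : Function.LeftInverse Φ'inv Φ') (x₀ : X) (h0 : Φ' x₀ = 0)
    (ρ : ℝ) (hρ : 0 < ρ) (hpos : ∀ x, dist x x₀ ≤ ρ → 0 ≤ Φ x) :
    ∃ σ > 0, ∀ x, dist x x₀ = ρ / 2 → σ ≤ Φ x := by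
  have hinv0 : Φ'inv 0 = x₀ := by rw [← h0, hleft]
  obtain ⟨η, hη, hη2⟩ := Metric.continuous_iff.1 hcont 0 (ρ / 4) (by linarith)
  refine ⟨η / 2 * (ρ / 4), by positivity, fun x hx => ?_⟩
  obtain ⟨y, h1, h2, h3⟩ := ekeland_ball hΦ x₀ ρ 0 hpos (half_pos hη) x (by linarith)
  have h4 := hpos y h1
  have h5 : ρ / 4 ≤ dist x y := by
    rcases h1.lt_or_eq with h | h
    · have h6 := hη2 (Φ' y) (by rw [dist_zero_right]; linarith [h3 h])
      rw [hleft, hinv0] at h6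
      have := dist_triangle x y x₀
      linarith
    · have := dist_triangle_left y x₀ x
      linarith
  have := mul_le_mul_of_nonneg_left h5 (half_pos hη).le
  linarith

lemma phi_nonneg [CompleteSpace X] {Φ : X → ℝ} {Φ' : X → X →L[ℝ] ℝ}
    (hΦ : ∀ x, HasFDerivAt Φ (Φ' x) x) (hΦ' : Continuous Φ')
    (Φ'inv : (X →L[ℝ] ℝ) → X) (hcont : Continuous Φ'inv)
    (hleft : Function.LeftInverse Φ'inv Φ') (x₀ : X) (hΦ0 : Φ x₀ = 0) (h0 : Φ' x₀ = 0)
    (ρ : ℝ) (hρ : 0 < ρ) (hpos : ∀ x, dist x x₀ ≤ ρ → 0 ≤ Φ x) : ∀ x, 0 ≤ Φ x := by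
  intro q
  by_contra hq
  push Not at hq
  have hinv0 : Φ'inv 0 = x₀ := by rw [← h0, hleft]
  have hc : Continuous Φ := continuous_iff_continuousAt.2 fun x => (hΦ x).continuousAt
  obtain ⟨σ, hσ, hsph⟩ := phi_sphere hΦ Φ'inv hcont hleft x₀ h0 ρ hρ hpos
  have hqd : ρ / 2 < dist q x₀ := by
    by_contra h
    have := hpos q (by linarith)
    linarith
  have hcrit := crit_of_ps hΦ' {x | σ ≤ Φ x} (isClosed_le continuous_const hc)
    (fun x _ h => ps_of_compact (K := fun _ => 0) Φ'inv hcont hleft (by simp) x {0}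
      isCompact_singleton (by simp) h) (by
      intro ε hε
      obtain ⟨x, h1, -, h3⟩ := mountain_pass hΦ hΦ' x₀ q σ (by linarith) (by linarith)
        (fun g h0 h1 => by
          obtain ⟨t, ht⟩ := path_sphere x₀ q (ρ/2) (by linarith) hqd g h0 h1
          exact ⟨t, hsph _ ht⟩) hε
      exact ⟨x, h1, h3⟩)
  obtain ⟨u, hu, hu0⟩ := hcrit
  have : u = x₀ := by rw [← hleft u, hu0, hinv0]
  subst this
  simp only [Set.mem_ofPred_eq] at hu
  linarith

lemma phi_coercive [CompleteSpace X] {Φ : X → ℝ} {Φ' : X → X →L[ℝ] ℝ}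
    (hΦ : ∀ x, HasFDerivAt Φ (Φ' x) x)
    (Φ'inv : (X →L[ℝ] ℝ) → X) (hcont : Continuous Φ'inv)
    (hleft : Function.LeftInverse Φ'inv Φ') (x₀ : X) (h0 : Φ' x₀ = 0)
    (hpos : ∀ x, 0 ≤ Φ x) : ∃ d > 0, ∀ x, d * (‖x‖ - ‖x₀‖ - 1) ≤ Φ x := by
  have hinv0 : Φ'inv 0 = x₀ := by rw [← h0, hleft]
  obtain ⟨η, hη, hη2⟩ := Metric.continuous_iff.1 hcont 0 1 one_pos
  refine ⟨η / 2, by positivity, fun x => ?_⟩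
  obtain ⟨y, h2, h3⟩ := ekeland_space hΦ 0 hpos (half_pos hη) x
  have h6 := hη2 (Φ' y) (by rw [dist_zero_right]; linarith)
  rw [hleft, hinv0] at h6
  have h7 := dist_triangle x y x₀
  have h8 := norm_sub_norm_le x x₀
  rw [← dist_eq_norm] at h8
  have := mul_le_mul_of_nonneg_left (show ‖x‖ - ‖x₀‖ - 1 ≤ dist x y by linarith) (half_pos hη).le
  linarith [hpos y]

end

theorem stmt8 {X : Type*} [NormedAddCommGroup X] [NormedSpace ℝ X] [CompleteSpace X]
    [TopologicalSpace.SeparableSpace X]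
    -- X is reflexive: the canonical inclusion into the double dual is surjective
    (hrefl : Function.Surjective (NormedSpace.inclusionInDoubleDual ℝ X))
    (Φ J : X → ℝ) (Φ' J' : X → X →L[ℝ] ℝ)
    -- Φ and J are C¹ with derivatives Φ' and J'
    (hΦdiff : ∀ x, HasFDerivAt Φ (Φ' x) x) (hΦ'cont : Continuous Φ')
    (hJdiff : ∀ x, HasFDerivAt J (J' x) x) (hJ'cont : Continuous J')
    -- Φ is sequentially weakly lower semicontinuous
    (hΦwlsc : ∀ (x : X) (xn : ℕ → X),
      (∀ f : X →L[ℝ] ℝ, Tendsto (fun n => f (xn n)) atTop (𝓝 (f x))) →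
      Φ x ≤ liminf (fun n => Φ (xn n)) atTop)
    -- Φ belongs to the class 𝔚_X
    (hΦW : ∀ (x : X) (xn : ℕ → X),
      (∀ f : X →L[ℝ] ℝ, Tendsto (fun n => f (xn n)) atTop (𝓝 (f x))) →
      liminf (fun n => Φ (xn n)) atTop ≤ Φ x →
      ∃ φ : ℕ → ℕ, StrictMono φ ∧ Tendsto (fun n => xn (φ n)) atTop (𝓝 x))
    -- Φ is bounded on each bounded subset of X
    (hΦbdd : ∀ s : Set X, IsBounded s → IsBounded (Φ '' s))
    -- Φ' admits a continuous inverse on X*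
    (Φ'inv : (X →L[ℝ] ℝ) → X) (hΦ'inv_cont : Continuous Φ'inv)
    (hΦ'inv_left : Function.LeftInverse Φ'inv Φ')
    (hΦ'inv_right : Function.RightInverse Φ'inv Φ')
    -- J' is a compact map
    (hJ'cpt : ∀ s : Set X, IsBounded s → IsCompact (closure (J' '' s)))
    -- Φ has a strict local minimum at x₀ with Φ(x₀) = J(x₀) = 0
    (x₀ : X)
    (hmin : ∃ ρ > 0, ∀ x : X, x ≠ x₀ → ‖x - x₀‖ < ρ → Φ x₀ < Φ x)
    (hΦ0 : Φ x₀ = 0) (hJ0 : J x₀ = 0)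
    (a b : ℝ) (ha : 0 < a) (hab : a ≤ b)
    -- (i)
    (hi : ∃ xbar : X, 0 < Φ xbar ∧ Φ xbar / a < J xbar)
    -- (ii)
    (hii : ∃ ε > 0, ε ≤ 1 / b ∧ ∃ R > 0, ∃ r > 0,
      (∀ x : X, R ≤ ‖x‖ → J x ≤ (1 / b - ε) * Φ x) ∧
      (∀ x : X, x ≠ x₀ → ‖x - x₀‖ ≤ r → J x ≤ (1 / b - ε) * Φ x)) :
    ∃ γ > 0, ∀ lam ∈ Set.Icc a b,
      ∀ (Ψ : X → ℝ) (Ψ' : X → X →L[ℝ] ℝ),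
        (∀ x, HasFDerivAt Ψ (Ψ' x) x) → Continuous Ψ' →
        (∀ s : Set X, IsBounded s → IsCompact (closure (Ψ' '' s))) →
        ∃ δ₀ > 0, ∀ μ ∈ Set.Icc (0 : ℝ) δ₀,
          ∃ u₁ u₂ u₃ : X, u₁ ≠ u₂ ∧ u₁ ≠ u₃ ∧ u₂ ≠ u₃ ∧
            ∀ u ∈ ({u₁, u₂, u₃} : Set X),
              Φ' u = lam • J' u + μ • Ψ' u ∧ ‖u‖ ≤ γ := by
  obtain ⟨ρ, hρ, hmin⟩ := hmin
  obtain ⟨q, hq0, hq⟩ := hi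
  obtain ⟨ε, hε, hεb, R, hR, r, hr, hii1, hii2⟩ := hii
  have hb : 0 < b := ha.trans_le hab
  have hΦc : Continuous Φ := continuous_iff_continuousAt.2 fun x => (hΦdiff x).continuousAt
  have hJc : Continuous J := continuous_iff_continuousAt.2 fun x => (hJdiff x).continuousAt
  have hnn : ∀ x, ‖x - x₀‖ < ρ → 0 ≤ Φ x := by
    intro x hx
    by_cases h : x = x₀
    · rw [h, hΦ0]
    · rw [← hΦ0]; exact (hmin x h hx).le
  have h0 : Φ' x₀ = 0 := by
    have : IsLocalMin Φ x₀ := by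
      filter_upwards [Metric.ball_mem_nhds x₀ hρ] with x hx
      rw [hΦ0]
      exact hnn x (by rwa [← dist_eq_norm])
    exact this.hasFDerivAt_eq_zero (hΦdiff x₀)
  set ρ₁ := min (ρ / 2) r with hρ₁
  have hρ₁pos : 0 < ρ₁ := lt_min (by linarith) hr
  have hρ₁ρ : ρ₁ ≤ ρ / 2 := min_le_left _ _
  have hρ₁r : ρ₁ ≤ r := min_le_right _ _
  have hnn1 : ∀ x, dist x x₀ ≤ ρ₁ → 0 ≤ Φ x := fun x hx => hnn x (by
    rw [← dist_eq_norm]; linarith)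
  obtain ⟨σ, hσ, hsph⟩ := phi_sphere hΦdiff Φ'inv hΦ'inv_cont hΦ'inv_left x₀ h0 ρ₁ hρ₁pos hnn1
  have hpos := phi_nonneg hΦdiff hΦ'cont Φ'inv hΦ'inv_cont hΦ'inv_left x₀ hΦ0 h0 ρ₁ hρ₁pos hnn1
  obtain ⟨d, hd, hcoer⟩ := phi_coercive hΦdiff Φ'inv hΦ'inv_cont hΦ'inv_left x₀ h0 hpos
  set κ := b * ε with hκ
  have hκpos : 0 < κ := mul_pos hb hε
  have hkey : ∀ lam ∈ Set.Icc a b, ∀ x, J x ≤ (1 / b - ε) * Φ x → κ * Φ x ≤ Φ x - lam * J x := by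
    intro lam hlam x hx
    have h1 : lam * J x ≤ lam * ((1 / b - ε) * Φ x) :=
      mul_le_mul_of_nonneg_left hx (ha.le.trans hlam.1)
    have h2 : lam * ((1 / b - ε) * Φ x) ≤ b * ((1 / b - ε) * Φ x) :=
      mul_le_mul_of_nonneg_right hlam.2 (mul_nonneg (by linarith) (hpos x))
    have h3 : b * ((1 / b - ε) * Φ x) = (1 - κ) * Φ x := by
      rw [hκ]; field_simp
    linarith
  have hnear : ∀ x, dist x x₀ ≤ r → J x ≤ (1 / b - ε) * Φ x := by
    intro x hx
    by_cases h : x = x₀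
    · simp [h, hΦ0, hJ0]
    · exact hii2 x h (by rwa [← dist_eq_norm])
  have hbound : ∀ lam ∈ Set.Icc a b, ∀ (C : ℝ) (u : X), Φ u - lam * J u ≤ C →
      ‖u‖ ≤ max R (‖x₀‖ + 1 + C / (κ * d)) := by
    intro lam hlam C u hu
    rcases le_or_gt R ‖u‖ with h | h
    · refine le_max_of_le_right ?_
      have h1 := hkey lam hlam u (hii1 u h)
      have h2 := mul_le_mul_of_nonneg_left (hcoer u) hκpos.le
      have h3 : ‖u‖ - ‖x₀‖ - 1 ≤ C / (κ * d) := by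
        rw [le_div_iff₀ (by positivity)]
        linarith
      linarith
    · exact le_max_of_le_left h.le
  have hseg : IsCompact (segment ℝ x₀ q) := by
    rw [segment_eq_image_lineMap]
    exact isCompact_Icc.image AffineMap.lineMap_continuous
  obtain ⟨C₁, hC₁⟩ := hseg.exists_bound_of_continuousOn hΦc.continuousOn
  obtain ⟨C₂, hC₂⟩ := hseg.exists_bound_of_continuousOn hJc.continuousOn
  obtain ⟨CJ, hCJ0, hCJ⟩ := bdd_of_compact_deriv hJdiff hJ'cpt R hR
  set γ := max R (‖x₀‖ + 1 + (C₁ + b * C₂ + 2) / (κ * d)) with hγ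
  have hγpos : 0 < γ := lt_max_of_lt_left hR
  refine ⟨γ, hγpos, ?_⟩
  intro lam hlam Ψ Ψ' hΨ hΨ'c hΨ'cpt
  have hlam0 : 0 < lam := ha.trans_le hlam.1
  obtain ⟨M, hM0, hM⟩ := bdd_of_compact_deriv hΨ hΨ'cpt γ hγpos
  obtain ⟨h, h', B, hB, hhd, hh'c, hhB, hh'B, hh'1⟩ := trunc_exists M hM0
  have hη : Φ q - lam * J q < 0 := by
    have h1 : Φ q < J q * a := (div_lt_iff₀ ha).1 hq
    have hJq : 0 < J q := (div_pos hq0 ha).trans hq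
    have h2 := mul_le_mul_of_nonneg_left hlam.1 hJq.le
    linarith
  obtain ⟨τ, hτ, hτ1, hτ2, hτ3⟩ : ∃ τ > 0, τ ≤ 1 ∧ 4 * τ ≤ κ * σ ∧
      4 * τ ≤ -(Φ q - lam * J q) := by
    refine ⟨min 1 (min (κ * σ / 4) (-(Φ q - lam * J q) / 4)), ?_, min_le_left _ _, ?_, ?_⟩
    · refine lt_min one_pos (lt_min (by positivity) (by linarith))
    · have := (min_le_right (1:ℝ) _).trans (min_le_left (κ * σ / 4) (-(Φ q - lam * J q) / 4))
      linarith
    · have := (min_le_right (1:ℝ) _).trans (min_le_right (κ * σ / 4) (-(Φ q - lam * J q) / 4))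
      linarith
  refine ⟨τ / B, div_pos hτ hB, ?_⟩
  intro μ hμ
  have hpert : ∀ x, |μ * h (Ψ x)| ≤ τ := by
    intro x
    rw [abs_mul, abs_of_nonneg hμ.1]
    calc μ * |h (Ψ x)| ≤ τ / B * B := mul_le_mul hμ.2 (hhB _) (abs_nonneg _) (by positivity)
      _ = τ := by field_simp
  have hp1 : ∀ x, μ * h (Ψ x) ≤ τ := fun x => (abs_le.1 (hpert x)).2
  have hp2 : ∀ x, -τ ≤ μ * h (Ψ x) := fun x => (abs_le.1 (hpert x)).1
  let E : X → ℝ := fun x => Φ x - lam * J x - μ * h (Ψ x)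
  let K : X → X →L[ℝ] ℝ := fun x => lam • J' x + μ • (h' (Ψ x) • Ψ' x)
  let E' : X → X →L[ℝ] ℝ := fun x => Φ' x - K x
  have hΨc : Continuous Ψ := continuous_iff_continuousAt.2 fun x => (hΨ x).continuousAt
  have hE : ∀ x, HasFDerivAt E (E' x) x := by
    intro x
    have h1 := ((hΦdiff x).sub ((hJdiff x).const_mul lam)).sub
      (((hhd (Ψ x)).comp_hasFDerivAt x (hΨ x)).const_mul μ)
    have h2 : E' x = Φ' x - lam • J' x - μ • h' (Ψ x) • Ψ' x := sub_add_eq_sub_sub _ _ _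
    rw [h2]
    exact h1
  have hE' : Continuous E' := by
    have : Continuous fun x => h' (Ψ x) := hh'c.comp hΨc
    exact hΦ'cont.sub ((hJ'cont.const_smul lam).add ((this.smul hΨ'c).const_smul μ))
  have hPS : ∀ (C : ℝ) (x : ℕ → X), (∀ n, E (x n) ≤ C) →
      Tendsto (fun n => E' (x n)) atTop (𝓝 0) →
      ∃ u, ∃ φ : ℕ → ℕ, StrictMono φ ∧ Tendsto (fun n => x (φ n)) atTop (𝓝 u) := by
    intro C x hx hlim
    set γ' := max R (‖x₀‖ + 1 + (C + τ) / (κ * d))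
    have hxb : ∀ n, x n ∈ Metric.closedBall (0:X) γ' := by
      intro n
      rw [mem_closedBall_zero_iff]
      refine hbound lam hlam _ _ ?_
      have h1 : Φ (x n) - lam * J (x n) - μ * h (Ψ (x n)) ≤ C := hx n
      linarith [hp1 (x n)]
    have hk := ((hJ'cpt _ (Metric.isBounded_closedBall (x := (0:X)) (r := γ'))).prod
      ((isCompact_Icc (a := -B) (b := B)).prod
        (hΨ'cpt _ (Metric.isBounded_closedBall (x := (0:X)) (r := γ'))))).image
      (f := fun w : (X →L[ℝ] ℝ) × (ℝ × (X →L[ℝ] ℝ)) => lam • w.1 + μ • (w.2.1 • w.2.2))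
      (by fun_prop)
    refine ps_of_compact (K := K) Φ'inv hΦ'inv_cont hΦ'inv_left (fun _ => rfl) x _ hk ?_ hlim
    intro n
    exact ⟨(J' (x n), (h' (Ψ (x n)), Ψ' (x n))), ⟨subset_closure ⟨_, hxb n, rfl⟩,
      abs_le.1 (hh'B _), subset_closure ⟨_, hxb n, rfl⟩⟩, rfl⟩
  have hlow : ∀ x, -(b * CJ) - τ ≤ E x := by
    intro x
    have h1 : -(b * CJ) ≤ Φ x - lam * J x := by
      rcases le_or_gt R ‖x‖ with hx | hx
      · have h1 := hkey lam hlam x (hii1 x hx)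
        have h2 := mul_nonneg hκpos.le (hpos x)
        have h3 := mul_nonneg hb.le hCJ0
        linarith
      · have h1 : lam * J x ≤ lam * CJ :=
          mul_le_mul_of_nonneg_left ((le_abs_self _).trans (hCJ x hx.le)) hlam0.le
        have h2 := mul_le_mul_of_nonneg_right hlam.2 hCJ0
        linarith [hpos x]
    show -(b * CJ) - τ ≤ Φ x - lam * J x - μ * h (Ψ x)
    linarith [hp1 x]
  obtain ⟨u₁, u₂, u₃, h12, h13, h23, hu⟩ := three_crit hE hE' hPS _ hlow x₀ q (ρ₁ / 2) τ
    (κ * σ - τ) (by linarith)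
    (by
      intro x hx
      have h1 := hkey lam hlam x (hnear x (by linarith))
      have h2 := mul_nonneg hκpos.le (hpos x)
      show -τ ≤ Φ x - lam * J x - μ * h (Ψ x)
      linarith [hp1 x])
    (by
      intro x hx
      have h1 := hkey lam hlam x (hnear x (by linarith))
      have h2 := mul_le_mul_of_nonneg_left (hsph x hx) hκpos.le
      show κ * σ - τ ≤ Φ x - lam * J x - μ * h (Ψ x)
      linarith [hp1 x])
    (by linarith)
    (by
      show Φ x₀ - lam * J x₀ - μ * h (Ψ x₀) ≤ τ
      rw [hΦ0, hJ0]
      linarith [hp2 x₀])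
    (by
      show Φ q - lam * J q - μ * h (Ψ q) < -τ
      linarith [hp2 q])
  refine ⟨u₁, u₂, u₃, h12, h13, h23, fun u hu' => ?_⟩
  obtain ⟨hu0, y, hy, huy⟩ := hu u hu'
  have hnorm : ‖u‖ ≤ γ := by
    refine hbound lam hlam _ u ?_
    have h1 : Φ u - lam * J u - μ * h (Ψ u) ≤ Φ y - lam * J y - μ * h (Ψ y) := huy
    have h2 : Φ y ≤ C₁ := (le_abs_self _).trans (hC₁ y hy)
    have h3 : -J y ≤ C₂ := (neg_le_abs _).trans (hC₂ y hy)
    have h4 : 0 ≤ C₂ := (norm_nonneg _).trans (hC₂ y hy)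
    have h5 := mul_le_mul_of_nonneg_left h3 hlam0.le
    have h6 := mul_le_mul_of_nonneg_right hlam.2 h4
    linarith [hp1 u, hp2 y]
  refine ⟨?_, hnorm⟩
  have h1 : Φ' u - (lam • J' u + μ • (h' (Ψ u) • Ψ' u)) = 0 := hu0
  rw [hh'1 _ (hM u hnorm), one_smul] at h1
  exact sub_eq_zero.1 h1
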